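/- Let d ≥ 2 and let f : D^d → C be holomorphic with |f| ≤ 1. Then for every nontrivial partition S ⊔ T = {1,...,d} there exist positive semi-definite kernels K and L on D^d such that (1 − z_j conj(ζ_j))K(z,ζ) is positive semi-definite for every j ∈ S, (1 − z_k conj(ζ_k))L(z,ζ) is positive semi-definite for every k ∈ T, and (1 − f(z) conj(f(ζ)))/∏_{j=1}^d (1 − z_j conj(ζ_j)) = K(z,ζ) + L(z,ζ). -/

import Mathlib

open Complex Finset ComplexOrder

/-- A kernel `K` is positive semi-definite on a subset `D`. -/
def IsPSDKernelOn {γ : Type*} (D : Set γ) (K : γ → γ → ℂ) : Prop :=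
  ∀ (m : ℕ) (z : Fin m → γ), (∀ i, z i ∈ D) → ∀ c : Fin m → ℂ,
    0 ≤ ∑ i, ∑ j, c i * (starRingEnd ℂ) (c j) * K (z i) (z j)

/-- The open unit polydisk in `ℂ^d`. -/
def Polydisk (d : ℕ) : Set (Fin d → ℂ) := {z | ∀ j, ‖z j‖ < 1}

/-- A kernel `K` on the polydisk is `j`-contractive: `(1 - z_j conj(ζ_j)) K` is PSD. -/
def JContractive (d : ℕ) (j : Fin d) (K : (Fin d → ℂ) → (Fin d → ℂ) → ℂ) : Prop :=
  IsPSDKernelOn (Polydisk d)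
    (fun z ζ => (1 - z j * (starRingEnd ℂ) (ζ j)) * K z ζ)

/-!
For polynomial `f` bounded by `1` on the torus, realise the Szegő kernel as `⟪k z, k ζ⟫` in `H =
ℓ²(ℕ^d)`, sitting inside the sequences `X` on `ℤ^d` supported where the coordinates outside `S` are
nonnegative. On `X` the shifts in the directions of `S` are unitary, the others are isometries
leaving `Hᗮ` invariant, and `f` of the shifts is a contraction `M` by von Neumann's inequality. The
shorted operator of `1 - M M*` to `H` defines `K`. Its variational description shows that `K` is
contractive in the directions of `S`, and that what remains of the compression of `1 - M M*` to `H`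
is contractive in the other directions. A bounded holomorphic function is a pointwise limit of such
polynomials, and the kernels of the approximants converge along an ultrafilter.
-/

section

open scoped ComplexConjugate InnerProductSpace lp Topology

section Kernels

open Filter

variable {γ : Type*} {D : Set γ}

lemma IsPSDKernelOn.congr {K K' : γ → γ → ℂ} (hK : IsPSDKernelOn D K)
    (h : ∀ z ∈ D, ∀ ζ ∈ D, K z ζ = K' z ζ) : IsPSDKernelOn D K' := by
  intro m z hz c
  simpa only [h _ (hz _) _ (hz _)] using hK m z hz c

lemma IsPSDKernelOn.of_tendsto {ι : Type*} {l : Filter ι} [l.NeBot] {K : ι → γ → γ → ℂ}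
    {K' : γ → γ → ℂ} (hK : ∀ i, IsPSDKernelOn D (K i))
    (h : ∀ z ∈ D, ∀ ζ ∈ D, Tendsto (fun i => K i z ζ) l (𝓝 (K' z ζ))) : IsPSDKernelOn D K' := by
  intro m z hz c
  have sum_tendsto : Tendsto (fun i => ∑ p, ∑ q, c p * conj (c q) * K i (z p) (z q)) l
      (𝓝 (∑ p, ∑ q, c p * conj (c q) * K' (z p) (z q))) :=
    tendsto_finsetSum _ fun p _ => tendsto_finsetSum _ fun q _ =>
      (h _ (hz p) _ (hz q)).const_mul _
  exact ge_of_tendsto' sum_tendsto fun i => hK i m z hz c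

lemma IsPSDKernelOn.apply_self_nonneg {K : γ → γ → ℂ} (hK : IsPSDKernelOn D K) {z : γ}
    (hz : z ∈ D) : 0 ≤ K z z := by
  simpa using hK 1 (fun _ => z) (fun _ => hz) (fun _ => 1)

lemma IsPSDKernelOn.norm_apply_le {K : γ → γ → ℂ} (hK : IsPSDKernelOn D K) {z ζ : γ}
    (hz : z ∈ D) (hζ : ζ ∈ D) : ‖K z ζ‖ ≤ (K z z).re + (K ζ ζ).re := by
  set q : ℂ → ℂ := fun c => K z z + conj c * K z ζ + c * K ζ z + c * conj c * K ζ ζ with hq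
  have q_nonneg (c : ℂ) : 0 ≤ q c := by
    have h := hK 2 ![z, ζ] (by simp [Fin.forall_fin_two, hz, hζ]) ![1, c]
    simp only [Fin.sum_univ_two, Fin.isValue, Matrix.cons_val_zero, map_one, mul_one,
      Matrix.cons_val_one, Matrix.cons_val_fin_one, one_mul] at h
    convert h using 1
    simp only [hq]
    ring
  have polarization : 4 * K z ζ = q 1 - q (-1) + I * q I - I * q (-I) := by
    simp only [hq, map_neg, map_one, conj_I]
    linear_combination (2 * K z ζ - 2 * K ζ z) * I_mul_I
  have norm_q (c : ℂ) : ‖q c‖ = (q c).re := (re_eq_norm.2 (q_nonneg c)).symm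
  have four_mul_le : 4 * ‖K z ζ‖ ≤ (q 1).re + (q (-1)).re + (q I).re + (q (-I)).re :=
    calc 4 * ‖K z ζ‖ = ‖q 1 - q (-1) + I * q I - I * q (-I)‖ := by
          rw [← polarization, norm_mul]; norm_num
      _ ≤ ‖q 1‖ + ‖q (-1)‖ + ‖I * q I‖ + ‖I * q (-I)‖ :=
          norm_sub_le_of_le (norm_add_le_of_le (norm_sub_le _ _) le_rfl) le_rfl
      _ = _ := by simp only [norm_mul, norm_I, one_mul, norm_q]
  simp only [hq, map_one, one_mul, mul_one, add_re, map_neg, neg_mul, mul_neg, neg_neg, neg_re,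
    conj_I, I_mul_I, mul_re, I_re, zero_mul, I_im, zero_sub] at four_mul_le
  linarith

lemma IsPSDKernelOn.exists_tendsto {ι : Type*} (U : Ultrafilter ι) {K : ι → γ → γ → ℂ}
    (hK : ∀ i, IsPSDKernelOn D (K i)) {R : γ → ℝ}
    (hR : ∀ z ∈ D, ∀ᶠ i in U, (K i z z).re ≤ R z) :
    ∃ K' : γ → γ → ℂ, ∀ z ∈ D, ∀ ζ ∈ D, Tendsto (fun i => K i z ζ) U (𝓝 (K' z ζ)) := by
  have pointwise (z ζ : γ) :
      ∃ a, z ∈ D → ζ ∈ D → Tendsto (fun i => K i z ζ) U (𝓝 a) := by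
    by_cases h : z ∈ D ∧ ζ ∈ D
    · have bounded : ∀ᶠ i in U, K i z ζ ∈ Metric.closedBall (0 : ℂ) (R z + R ζ) := by
        filter_upwards [hR z h.1, hR ζ h.2] with i hz hζ
        exact mem_closedBall_zero_iff.2
          (((hK i).norm_apply_le h.1 h.2).trans (add_le_add hz hζ))
      obtain ⟨a, -, ha⟩ := (isCompact_closedBall (0 : ℂ) (R z + R ζ)).ultrafilter_le_nhds
        (U.map fun i => K i z ζ) (le_principal_iff.2 bounded)
      exact ⟨a, fun _ _ => ha⟩
    · exact ⟨0, fun hz hζ => absurd ⟨hz, hζ⟩ h⟩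
  choose K' hK' using pointwise
  exact ⟨K', fun z hz ζ hζ => hK' z ζ hz hζ⟩

variable {X : Type*} [NormedAddCommGroup X] [InnerProductSpace ℂ X] {H : Submodule ℂ X}
  {k : γ → X} {G : X →L[ℂ] X}

lemma isPSDKernelOn_inner (hk : ∀ z ∈ D, k z ∈ H) (hG : ∀ v ∈ H, 0 ≤ ⟪v, G v⟫_ℂ) :
    IsPSDKernelOn D fun z ζ => ⟪k z, G (k ζ)⟫_ℂ := by
  intro m z hz c
  convert hG (∑ i, conj (c i) • k (z i)) (sum_mem fun i _ => H.smul_mem _ (hk _ (hz i))) using 1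
  simp only [sum_inner, map_sum, inner_sum, map_smul, inner_smul_left, inner_smul_right, conj_conj,
    mul_sum, mul_assoc]
  rw [sum_comm]
  exact sum_congr rfl fun _ _ => sum_congr rfl fun _ _ => mul_left_comm _ _ _

lemma isPSDKernelOn_one_sub_mul_inner [CompleteSpace X] {a : γ → ℂ} {C : X →L[ℂ] X}
    (hk : ∀ z ∈ D, k z ∈ H) (hC : ∀ z ∈ D, C (k z) = conj (a z) • k z)
    (hG : ∀ v ∈ H, ⟪C v, G (C v)⟫_ℂ ≤ ⟪v, G v⟫_ℂ) :
    IsPSDKernelOn D fun z ζ => (1 - a z * conj (a ζ)) * ⟪k z, G (k ζ)⟫_ℂ := by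
  have gap (v w : X) : ⟪v, (G - C.adjoint ∘L G ∘L C) w⟫_ℂ = ⟪v, G w⟫_ℂ - ⟪C v, G (C w)⟫_ℂ := by
    simp [ContinuousLinearMap.adjoint_inner_right]
  refine (isPSDKernelOn_inner (G := G - C.adjoint ∘L G ∘L C) hk fun v hv => ?_).congr
    fun z hz ζ hζ => ?_
  · rw [gap]
    exact sub_nonneg.2 (hG v hv)
  · rw [gap, hC z hz, hC ζ hζ, map_smul, inner_smul_left, inner_smul_right, conj_conj]
    ring

end Kernels

/-- The kernel `(1 - f(z) conj(f(ζ))) / ∏ j, (1 - z_j conj(ζ_j))` is the sum of a kernel that is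
`j`-contractive for `j ∈ S` and one that is `k`-contractive for `k ∉ S`. -/
def HasPickSplitting {d : ℕ} (S : Set (Fin d)) (f : (Fin d → ℂ) → ℂ) : Prop :=
  ∃ K L : (Fin d → ℂ) → (Fin d → ℂ) → ℂ,
    IsPSDKernelOn (Polydisk d) K ∧ IsPSDKernelOn (Polydisk d) L ∧
    (∀ j ∈ S, JContractive d j K) ∧ (∀ k ∈ Sᶜ, JContractive d k L) ∧
    ∀ z ∈ Polydisk d, ∀ ζ ∈ Polydisk d,
      (1 - f z * (starRingEnd ℂ) (f ζ)) /
          ∏ j, (1 - z j * (starRingEnd ℂ) (ζ j)) = K z ζ + L z ζ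

section Splitting

open Filter

variable {d : ℕ} {S : Set (Fin d)}

lemma HasPickSplitting.of_tendsto {ι : Type*} {l : Filter ι} [l.NeBot]
    {f : ι → (Fin d → ℂ) → ℂ} {g : (Fin d → ℂ) → ℂ} (hf : ∀ i, HasPickSplitting S (f i))
    (hfg : ∀ z ∈ Polydisk d, Tendsto (fun i => f i z) l (𝓝 (g z))) : HasPickSplitting S g := by
  choose K L hK hL hKS hLS heq using hf
  let U := Ultrafilter.of l
  let Q (h : (Fin d → ℂ) → ℂ) (z ζ : Fin d → ℂ) : ℂ :=
    (1 - h z * conj (h ζ)) / ∏ j, (1 - z j * conj (ζ j))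
  have tendsto_Q : ∀ z ∈ Polydisk d, ∀ ζ ∈ Polydisk d,
      Tendsto (fun i => Q (f i) z ζ) U (𝓝 (Q g z ζ)) := fun z hz ζ hζ =>
    ((((hfg z hz).mul ((continuous_conj.tendsto _).comp (hfg ζ hζ))).const_sub 1).div_const
      _).mono_left (Ultrafilter.of_le l)
  have K_le : ∀ z ∈ Polydisk d, ∀ᶠ i in U, (K i z z).re ≤ (Q g z z).re + 1 := fun z hz => by
    filter_upwards [((continuous_re.tendsto _).comp (tendsto_Q z hz z hz)).eventually_le_const
      (lt_add_one _)] with i hi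
    have L_nonneg := (Complex.le_def.1 ((hL i).apply_self_nonneg hz)).1
    have split := congrArg Complex.re (heq i z hz z hz)
    simp only [Function.comp_apply, add_re, zero_re, Q] at hi L_nonneg split ⊢
    linarith
  obtain ⟨K', tendsto_K⟩ := IsPSDKernelOn.exists_tendsto U hK K_le
  have tendsto_L : ∀ z ∈ Polydisk d, ∀ ζ ∈ Polydisk d,
      Tendsto (fun i => L i z ζ) U (𝓝 (Q g z ζ - K' z ζ)) := fun z hz ζ hζ =>
    ((tendsto_Q z hz ζ hζ).sub (tendsto_K z hz ζ hζ)).congr fun i =>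
      sub_eq_of_eq_add' (heq i z hz ζ hζ)
  exact ⟨K', fun z ζ => Q g z ζ - K' z ζ, .of_tendsto hK tendsto_K, .of_tendsto hL tendsto_L,
    fun j hj => .of_tendsto (fun i => hKS i j hj) fun z hz ζ hζ =>
      (tendsto_K z hz ζ hζ).const_mul _,
    fun k hk => .of_tendsto (fun i => hLS i k hk) fun z hz ζ hζ =>
      (tendsto_L z hz ζ hζ).const_mul _,
    fun z _ ζ _ => (add_sub_cancel _ _).symm⟩

end Splitting

section ShortedOperator

open ContinuousLinearMap

variable {X : Type*} [NormedAddCommGroup X] [InnerProductSpace ℂ X]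

/-- `N* N` is the shorted operator (Krein, Anderson–Trapp) of `1 - A* A` to `H`: the largest
positive operator below `1 - A* A` that vanishes on `Hᗮ`. -/
def IsShortedDefectRoot (A : X →L[ℂ] X) (H : Submodule ℂ X) (N : X →L[ℂ] X) : Prop :=
  ∀ x, IsGLB ((fun e => ‖x + e‖ ^ 2 - ‖A (x + e)‖ ^ 2) '' (Hᗮ : Set X)) (‖N x‖ ^ 2)

variable {A N : X →L[ℂ] X} {H : Submodule ℂ X}

lemma norm_add_sq_sub_norm_apply_add_sq [H.HasOrthogonalProjection]
    (hA : ∀ e ∈ Hᗮ, A e ∈ Hᗮ) {v e : X} (hv : v ∈ H) (he : e ∈ Hᗮ) :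
    ‖v + e‖ ^ 2 - ‖A (v + e)‖ ^ 2 = ‖v‖ ^ 2 - ‖H.starProjection (A v)‖ ^ 2 -
      (‖Hᗮ.starProjection (A (v + e))‖ ^ 2 - ‖e‖ ^ 2) := by
  have proj_add : H.starProjection (A (v + e)) = H.starProjection (A v) := by
    rw [map_add, map_add, H.starProjection_apply_eq_zero_iff.2 (hA e he), add_zero]
  have pythagoras : ‖v + e‖ ^ 2 = ‖v‖ ^ 2 + ‖e‖ ^ 2 := by
    simp only [sq]
    exact norm_add_sq_eq_norm_sq_add_norm_sq_of_inner_eq_zero _ _ (he v hv)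
  rw [pythagoras, H.norm_sq_eq_add_norm_sq_starProjection (A (v + e)), proj_add]
  ring

namespace IsShortedDefectRoot

lemma apply_of_mem_orthogonal (hN : IsShortedDefectRoot A H N) {e : X} (he : e ∈ Hᗮ) :
    N e = 0 := by
  simpa using (hN e).1 ⟨-e, neg_mem he, rfl⟩

lemma apply_starProjection [H.HasOrthogonalProjection] (hN : IsShortedDefectRoot A H N) (x : X) :
    N (H.starProjection x) = N x := by
  rw [eq_comm, ← sub_eq_zero, ← map_sub]
  exact hN.apply_of_mem_orthogonal (H.sub_starProjection_mem_orthogonal x)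

lemma norm_apply_isometry_le (hN : IsShortedDefectRoot A H N) {W : X →L[ℂ] X}
    (hW : ∀ x, ‖W x‖ = ‖x‖) (hAW : Commute A W) (hWH : ∀ e ∈ Hᗮ, W e ∈ Hᗮ) (x : X) :
    ‖N (W x)‖ ^ 2 ≤ ‖N x‖ ^ 2 := by
  refine (hN x).2 ?_
  rintro _ ⟨e, he, rfl⟩
  have commute_apply : A (W (x + e)) = W (A (x + e)) := congr($hAW (x + e))
  simpa only [← map_add, commute_apply, hW] using (hN (W x)).1 ⟨W e, hWH e he, rfl⟩

variable [H.HasOrthogonalProjection]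

lemma norm_sq_le (hN : IsShortedDefectRoot A H N) (v : X) :
    ‖N v‖ ^ 2 ≤ ‖v‖ ^ 2 - ‖H.starProjection (A v)‖ ^ 2 := by
  have h := (hN v).1 ⟨0, zero_mem _, rfl⟩
  simp only [add_zero] at h
  refine h.trans ?_
  gcongr
  exact H.norm_starProjection_apply_le _

/-- The remainder is the supremum over `e ∈ Hᗮ` of `‖Q A (v + e)‖² - ‖e‖²`, where `Q` is the
projection onto `Hᗮ`. -/
lemma remainder_apply_le (hN : IsShortedDefectRoot A H N) (hA : ∀ e ∈ Hᗮ, A e ∈ Hᗮ)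
    {W U : X →L[ℂ] X} (hW : ∀ x, ‖W x‖ ≤ ‖x‖) (hU : ∀ x, ‖U x‖ = ‖x‖) (hWU : ∀ x, W (U x) = x)
    (hAW : Commute A W) (hWH : ∀ v ∈ H, W v ∈ H) (hUH : ∀ e ∈ Hᗮ, U e ∈ Hᗮ) {v : X}
    (hv : v ∈ H) :
    ‖W v‖ ^ 2 - ‖H.starProjection (A (W v))‖ ^ 2 - ‖N (W v)‖ ^ 2 ≤
      ‖v‖ ^ 2 - ‖H.starProjection (A v)‖ ^ 2 - ‖N v‖ ^ 2 := by
  suffices h : ‖W v‖ ^ 2 - ‖H.starProjection (A (W v))‖ ^ 2 -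
      (‖v‖ ^ 2 - ‖H.starProjection (A v)‖ ^ 2 - ‖N v‖ ^ 2) ≤ ‖N (W v)‖ ^ 2 by linarith
  refine (hN (W v)).2 ?_
  rintro _ ⟨e, he, rfl⟩
  have lower := (hN v).1 ⟨U e, hUH e he, rfl⟩
  have compress : Hᗮ.starProjection (A (W v + e)) =
      Hᗮ.starProjection (W (Hᗮ.starProjection (A (v + U e)))) := by
    have commute_apply : A (W (v + U e)) = W (A (v + U e)) := congr($hAW (v + U e))
    have commute_add : A (W v + e) = W (A (v + U e)) := by rw [← commute_apply, map_add W, hWU]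
    rw [commute_add, ← sub_eq_zero, ← map_sub, ← map_sub, Hᗮ.starProjection_apply_eq_zero_iff,
      H.starProjection_orthogonal_val, sub_sub_cancel]
    exact H.le_orthogonal_orthogonal (hWH _ (H.starProjection_apply_mem _))
  have compressed_le : ‖Hᗮ.starProjection (A (W v + e))‖ ^ 2 ≤
      ‖Hᗮ.starProjection (A (v + U e))‖ ^ 2 := by
    rw [compress]
    gcongr
    exact (Hᗮ.norm_starProjection_apply_le _).trans (hW _)
  simp only [norm_add_sq_sub_norm_apply_add_sq hA hv (hUH e he), hU] at lower
  simp only [norm_add_sq_sub_norm_apply_add_sq hA (hWH v hv) he]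
  linarith

end IsShortedDefectRoot

variable [CompleteSpace X]

lemma isGLB_norm_add_sq (F : Submodule ℂ X) (x : X) :
    IsGLB ((fun u => ‖x + u‖ ^ 2) '' (F : Set X)) (‖Fᗮ.starProjection x‖ ^ 2) := by
  constructor
  · rintro _ ⟨u, hu, rfl⟩
    have hu_zero : Fᗮ.starProjection u = 0 :=
      Fᗮ.starProjection_apply_eq_zero_iff.2 (F.le_orthogonal_orthogonal hu)
    calc ‖Fᗮ.starProjection x‖ ^ 2 = ‖Fᗮ.starProjection (x + u)‖ ^ 2 := by
          rw [map_add, hu_zero, add_zero]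
      _ ≤ ‖x + u‖ ^ 2 := by gcongr; exact Fᗮ.norm_starProjection_apply_le _
  · intro b hb
    have le_on_closure : closure (F : Set X) ⊆ {u | b ≤ ‖x + u‖ ^ 2} :=
      closure_minimal (fun u hu => hb ⟨u, hu, rfl⟩)
        (isClosed_le continuous_const (by fun_prop))
    have mem_closure : Fᗮ.starProjection x - x ∈ closure (F : Set X) := by
      rw [← F.topologicalClosure_coe, SetLike.mem_coe, ← F.orthogonal_orthogonal_eq_closure,
        ← neg_sub]
      exact neg_mem (Fᗮ.sub_starProjection_mem_orthogonal x)
    simpa using le_on_closure mem_closure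

lemma exists_norm_sq_eq_sub {B : X →L[ℂ] X} (hB : ‖B‖ ≤ 1) :
    ∃ G : X →L[ℂ] X, ∀ x, ‖G x‖ ^ 2 = ‖x‖ ^ 2 - ‖B x‖ ^ 2 := by
  have defect_nonneg : 0 ≤ 1 - star B * B :=
    sub_nonneg.2 <| (CStarAlgebra.norm_le_one_iff_of_nonneg _ (star_mul_self_nonneg B)).1 <| by
      rw [CStarRing.norm_star_mul_self]
      exact mul_le_one₀ hB (norm_nonneg B) hB
  obtain ⟨G, hG⟩ := CStarAlgebra.nonneg_iff_eq_star_mul_self.1 defect_nonneg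
  refine ⟨G, fun x => ?_⟩
  have hG' : G.adjoint ∘L G = .id ℂ X - B.adjoint ∘L B := hG.symm
  rw [apply_norm_sq_eq_inner_adjoint_left, apply_norm_sq_eq_inner_adjoint_left, hG', sub_apply,
    inner_sub_left, map_sub, coe_id', id_eq, inner_self_eq_norm_sq]

lemma exists_isShortedDefectRoot {A : X →L[ℂ] X} (hA : ‖A‖ ≤ 1) (H : Submodule ℂ X) :
    ∃ N, IsShortedDefectRoot A H N := by
  obtain ⟨G, hG⟩ := exists_norm_sq_eq_sub hA
  let F := Hᗮ.map (G : X →ₗ[ℂ] X)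
  refine ⟨Fᗮ.starProjection ∘L G, fun x => ?_⟩
  convert isGLB_norm_add_sq F (G x) using 1
  · simp only [F, Submodule.map_coe, Set.image_image, coe_coe, ← map_add, hG]
  · rfl

variable {γ : Type*} {D : Set γ} {k : γ → X}

/-- `U` leaves `H` invariant and acts on it as multiplication by the symbol `a`, an element `h` of
`H` being regarded as the function `z ↦ ⟪k z, h⟫` on `D`. -/
structure IsMultiplierOn (D : Set γ) (k : γ → X) (H : Submodule ℂ X) (U : X →L[ℂ] X)
    (a : γ → ℂ) : Prop where
  apply_mem : ∀ h ∈ H, U h ∈ H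
  inner_apply : ∀ z ∈ D, ∀ h ∈ H, ⟪k z, U h⟫_ℂ = a z * ⟪k z, h⟫_ℂ

namespace IsMultiplierOn

variable {U : X →L[ℂ] X} {a : γ → ℂ}

lemma adjoint_apply_mem_orthogonal (hU : IsMultiplierOn D k H U a) {e : X} (he : e ∈ Hᗮ) :
    U.adjoint e ∈ Hᗮ := fun h hh => by
  rw [adjoint_inner_right]
  exact he _ (hU.apply_mem h hh)

lemma starProjection_adjoint_apply [H.HasOrthogonalProjection] (hU : IsMultiplierOn D k H U a)
    (hk : ∀ z ∈ D, k z ∈ H) {z : γ} (hz : z ∈ D) :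
    H.starProjection (U.adjoint (k z)) = conj (a z) • k z := by
  refine H.eq_starProjection_of_mem_of_inner_eq_zero (H.smul_mem _ (hk z hz)) fun h hh => ?_
  rw [inner_sub_left, adjoint_inner_left, inner_smul_left, conj_conj, hU.inner_apply z hz h hh,
    sub_self]

end IsMultiplierOn

variable [H.HasOrthogonalProjection]

lemma IsShortedDefectRoot.isPSDKernelOn_one_sub_mul {M U : X →L[ℂ] X} {a : γ → ℂ}
    (hN : IsShortedDefectRoot M.adjoint H N) (hk : ∀ z ∈ D, k z ∈ H)
    (hU : IsMultiplierOn D k H U a) (hMU : Commute M U) (hU_coisometry : ∀ x, ‖U.adjoint x‖ = ‖x‖) :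
    IsPSDKernelOn D fun z ζ => (1 - a z * conj (a ζ)) * ⟪k z, (N.adjoint ∘L N) (k ζ)⟫_ℂ := by
  refine isPSDKernelOn_one_sub_mul_inner (C := H.starProjection ∘L U.adjoint) hk
    (fun z hz => hU.starProjection_adjoint_apply hk hz) fun v _ => ?_
  simp only [coe_comp, Function.comp_apply, adjoint_inner_right, inner_self_eq_norm_sq_to_K,
    hN.apply_starProjection]
  exact_mod_cast hN.norm_apply_isometry_le hU_coisometry hMU.star_star
    (fun e he => hU.adjoint_apply_mem_orthogonal he) v

/-- The operator whose quadratic form is the remainder in `1 - A* A` after compressing to `H` and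
removing the shorted operator `N* N`. -/
noncomputable def remainder (A : X →L[ℂ] X) (H : Submodule ℂ X) [H.HasOrthogonalProjection]
    (N : X →L[ℂ] X) : X →L[ℂ] X :=
  .id ℂ X - (H.starProjection ∘L A).adjoint ∘L (H.starProjection ∘L A) - N.adjoint ∘L N

lemma inner_remainder (v w : X) :
    ⟪v, remainder A H N w⟫_ℂ =
      ⟪v, w⟫_ℂ - ⟪H.starProjection (A v), H.starProjection (A w)⟫_ℂ - ⟪N v, N w⟫_ℂ := by
  simp only [remainder, sub_apply, inner_sub_right, coe_comp, Function.comp_apply,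
    adjoint_inner_right, coe_id', id_eq]

lemma inner_remainder_self (v : X) :
    ⟪v, remainder A H N v⟫_ℂ = (‖v‖ ^ 2 - ‖H.starProjection (A v)‖ ^ 2 - ‖N v‖ ^ 2 : ℝ) := by
  rw [inner_remainder]
  simp only [inner_self_eq_norm_sq_to_K]
  push_cast
  rfl

lemma IsShortedDefectRoot.isPSDKernelOn_one_sub_mul_remainder {M U : X →L[ℂ] X} {a φ : γ → ℂ}
    (hN : IsShortedDefectRoot M.adjoint H N) (hM : IsMultiplierOn D k H M φ)
    (hk : ∀ z ∈ D, k z ∈ H) (hU : IsMultiplierOn D k H U a) (hMU : Commute M U)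
    (hU_isometry : ∀ x, ‖U x‖ = ‖x‖) (hUH : ∀ e ∈ Hᗮ, U e ∈ Hᗮ) :
    IsPSDKernelOn D fun z ζ =>
      (1 - a z * conj (a ζ)) * ⟪k z, remainder M.adjoint H N (k ζ)⟫_ℂ := by
  have adjoint_mem : ∀ v ∈ H, U.adjoint v ∈ H := by
    rw [← H.orthogonal_orthogonal]
    exact fun v hv e he => by rw [adjoint_inner_right]; exact hv _ (hUH e he)
  have adjoint_apply_self (x : X) : U.adjoint (U x) = x :=
    congr($((norm_map_iff_adjoint_comp_self U).1 hU_isometry) x)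
  have norm_adjoint_le (x : X) : ‖U.adjoint x‖ ≤ ‖x‖ := by
    refine (le_of_opNorm_le _ ?_ x).trans_eq (one_mul _)
    rw [LinearIsometryEquiv.norm_map]
    exact opNorm_le_bound _ zero_le_one fun x => by rw [hU_isometry, one_mul]
  refine isPSDKernelOn_one_sub_mul_inner (C := H.starProjection ∘L U.adjoint) hk
    (fun z hz => hU.starProjection_adjoint_apply hk hz) fun v hv => ?_
  rw [inner_remainder_self, inner_remainder_self, real_le_real, comp_apply,
    H.starProjection_eq_self_iff.2 (adjoint_mem v hv)]
  exact hN.remainder_apply_le (fun e he => hM.adjoint_apply_mem_orthogonal he) norm_adjoint_le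
    hU_isometry adjoint_apply_self hMU.star_star adjoint_mem hUH hv

theorem exists_kernel_splitting {M : X →L[ℂ] X} {φ : γ → ℂ} (hM : ‖M‖ ≤ 1)
    (hMφ : IsMultiplierOn D k H M φ) (hk : ∀ z ∈ D, k z ∈ H) :
    ∃ K L : γ → γ → ℂ, IsPSDKernelOn D K ∧ IsPSDKernelOn D L ∧
      (∀ U a, IsMultiplierOn D k H U a → Commute M U → (∀ x, ‖U.adjoint x‖ = ‖x‖) →
        IsPSDKernelOn D fun z ζ => (1 - a z * conj (a ζ)) * K z ζ) ∧
      (∀ U a, IsMultiplierOn D k H U a → Commute M U → (∀ x, ‖U x‖ = ‖x‖) →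
        (∀ e ∈ Hᗮ, U e ∈ Hᗮ) → IsPSDKernelOn D fun z ζ => (1 - a z * conj (a ζ)) * L z ζ) ∧
      ∀ z ∈ D, ∀ ζ ∈ D, (1 - φ z * conj (φ ζ)) * ⟪k z, k ζ⟫_ℂ = K z ζ + L z ζ := by
  obtain ⟨N, hN⟩ := exists_isShortedDefectRoot
    ((LinearIsometryEquiv.norm_map adjoint M).trans_le hM) H
  refine ⟨fun z ζ => ⟪k z, (N.adjoint ∘L N) (k ζ)⟫_ℂ,
    fun z ζ => ⟪k z, remainder M.adjoint H N (k ζ)⟫_ℂ,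
    isPSDKernelOn_inner hk fun v _ => ?_, isPSDKernelOn_inner hk fun v _ => ?_,
    fun U a hU hMU => hN.isPSDKernelOn_one_sub_mul hk hU hMU,
    fun U a hU hMU => hN.isPSDKernelOn_one_sub_mul_remainder hMφ hk hU hMU,
    fun z hz ζ hζ => ?_⟩
  · simp only [comp_apply, adjoint_inner_right, inner_self_eq_norm_sq_to_K]
    positivity
  · rw [inner_remainder_self, zero_le_real]
    exact sub_nonneg.2 (hN.norm_sq_le v)
  · beta_reduce
    rw [inner_remainder, hMφ.starProjection_adjoint_apply hk hz,
      hMφ.starProjection_adjoint_apply hk hζ, comp_apply, adjoint_inner_right, inner_smul_left,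
      inner_smul_right, conj_conj]
    ring

end ShortedOperator

section FunctionalCalculus

open MvPolynomial

variable {ι : Type*} {C : ℝ} {p : MvPolynomial ι ℂ}

lemma norm_aeval_le_of_mem_unitary {A : Type*} [CommCStarAlgebra A] {u : ι → A}
    (hu : ∀ j, u j ∈ unitary A) (hC : 0 ≤ C)
    (hp : ∀ w : ι → ℂ, (∀ j, ‖w j‖ = 1) → ‖eval w p‖ ≤ C) : ‖aeval u p‖ ≤ C := by
  rw [← (AddMonoidHomClass.isometry_iff_norm (WeakDual.gelfandTransform ℂ A)).1
    (gelfandTransform_isometry A), ContinuousMap.norm_le _ hC]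
  intro χ
  have apply_aeval : χ (aeval u p) = eval (fun j => χ (u j)) p :=
    comp_aeval_apply (f := u) (WeakDual.CharacterSpace.toAlgHom χ) p
  have norm_apply (j : ι) : ‖χ (u j)‖ = 1 := by
    have h : star (χ (u j)) * χ (u j) = 1 := by
      rw [← map_star, ← map_mul, (Unitary.mem_iff.1 (hu j)).1, map_one]
    exact CStarRing.norm_of_mem_unitary ⟨h, by rwa [mul_comm]⟩
  rw [WeakDual.gelfandTransform_apply_apply, apply_aeval]
  exact hp _ norm_apply

lemma exists_algHom_norm_le_of_commute {B : Type*} [CStarAlgebra B] {U : ι → unitary B}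
    (hU : ∀ i j, Commute (U i) (U j)) :
    ∃ Φ : MvPolynomial ι ℂ →ₐ[ℂ] B, (∀ j, Φ (X j) = U j) ∧ ∀ p C, 0 ≤ C →
      (∀ w : ι → ℂ, (∀ j, ‖w j‖ = 1) → ‖eval w p‖ ≤ C) → ‖Φ p‖ ≤ C := by
  let V (j : ι) : B := U j
  have adjoin_comm : IsMulCommutative (StarAlgebra.adjoin ℂ (Set.range V)) := by
    apply StarAlgebra.isMulCommutative_adjoin
    · rintro _ ⟨i, rfl⟩ _ ⟨j, rfl⟩
      exact congr(($(hU i j) : B))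
    · rintro _ ⟨i, rfl⟩ _ ⟨j, rfl⟩
      exact congr(($((hU i j).inv_right) : B))
  let T : StarSubalgebra ℂ B := (StarAlgebra.adjoin ℂ (Set.range V)).topologicalClosure
  have T_closed : IsClosed (T : Set B) := StarSubalgebra.isClosed_topologicalClosure _
  have T_comm : ∀ x y : T, x * y = y * x :=
    (StarSubalgebra.commRingTopologicalClosure (StarAlgebra.adjoin ℂ (Set.range V))
      adjoin_comm.is_comm.comm).mul_comm
  let : CStarAlgebra T := StarSubalgebra.cstarAlgebra T (h_closed := T_closed)
  let : CommCStarAlgebra T := { ‹CStarAlgebra T› with mul_comm := T_comm }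
  let u (j : ι) : T := ⟨V j, StarSubalgebra.le_topologicalClosure _
    (StarAlgebra.subset_adjoin ℂ _ ⟨j, rfl⟩)⟩
  have u_unitary (j : ι) : u j ∈ unitary T :=
    ⟨Subtype.ext (Unitary.mem_iff.1 (U j).2).1, Subtype.ext (Unitary.mem_iff.1 (U j).2).2⟩
  exact ⟨(T.subtype : T →ₐ[ℂ] B).comp (aeval u), fun j => by simp [u, V], fun p C hC hp =>
    norm_aeval_le_of_mem_unitary u_unitary hC hp⟩

end FunctionalCalculus

section SequenceSpace

variable {α : Type*} {I J : Set α}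

/-- The square-summable sequences that vanish off `I`. -/
def supportedOn (I : Set α) : Submodule ℂ ℓ²(α, ℂ) where
  carrier := {x | ∀ n ∉ I, x n = 0}
  zero_mem' _ _ := rfl
  add_mem' hx hy n hn := by simp [hx n hn, hy n hn]
  smul_mem' c x hx n hn := by simp [hx n hn]

lemma isClosed_supportedOn (I : Set α) : IsClosed (supportedOn I : Set ℓ²(α, ℂ)) := by
  have : (supportedOn I : Set ℓ²(α, ℂ)) = ⋂ n ∈ Iᶜ, {x | lp.evalCLM ℂ (fun _ => ℂ) 2 n x = 0} := by
    ext x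
    simp only [Set.mem_iInter]
    rfl
  rw [this]
  exact isClosed_biInter fun n _ => isClosed_eq (by fun_prop) continuous_const

instance : CompleteSpace (supportedOn I) := (isClosed_supportedOn I).completeSpace_coe

lemma supportedOn_mono (h : I ⊆ J) : supportedOn I ≤ supportedOn J :=
  fun _ hx n hn => hx n fun hI => hn (h hI)

/-- The sequences supported in `I`, as a subspace of those supported in `J`. -/
noncomputable abbrev supportedIn (J I : Set α) : Submodule ℂ (supportedOn J) :=
  (supportedOn I).comap (supportedOn J).subtype

instance : CompleteSpace (supportedIn J I) :=
  ((isClosed_supportedOn I).preimage continuous_subtype_val).completeSpace_coe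

lemma mem_supportedIn_orthogonal (h : I ⊆ J) {y : supportedOn J} :
    y ∈ (supportedIn J I)ᗮ ↔ ∀ n ∈ I, (y : ℓ²(α, ℂ)) n = 0 := by
  classical
  constructor
  · intro hy n hn
    have single_mem : lp.single 2 n (1 : ℂ) ∈ supportedOn I := fun m hm =>
      lp.single_apply_ne 2 n _ (ne_of_mem_of_not_mem hn hm).symm
    have := hy ⟨_, supportedOn_mono h single_mem⟩ single_mem
    simpa [lp.inner_single_left] using this
  · intro hy x hx
    refine (lp.inner_eq_tsum _ _).trans ((tsum_congr fun n => ?_).trans tsum_zero)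
    by_cases hn : n ∈ I
    · exact (congrArg (inner ℂ _) (hy n hn)).trans (inner_zero_right _)
    · exact (congrArg (inner ℂ · _) (hx n hn)).trans (inner_zero_left _)

lemma memℓp_two_comp_equiv {x : α → ℂ} (hx : Memℓp x 2) (σ : α ≃ α) : Memℓp (x ∘ σ) 2 := by
  rw [memℓp_gen_iff (by norm_num)] at hx ⊢
  exact σ.summable_iff.2 hx

variable {G : Type*} [AddCommGroup G]

/-- Translation by `g` on `ℓ²(G)`: it carries the basis vector at `n` to the one at `n + g`. -/
noncomputable def translation (g : G) : ℓ²(G, ℂ) ≃ₗᵢ[ℂ] ℓ²(G, ℂ) where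
  toFun x := ⟨fun n => x (n - g), memℓp_two_comp_equiv (lp.memℓp x) (Equiv.subRight g)⟩
  invFun x := ⟨fun n => x (n + g), memℓp_two_comp_equiv (lp.memℓp x) (Equiv.addRight g)⟩
  map_add' _ _ := rfl
  map_smul' _ _ := rfl
  left_inv x := by ext n; exact congrArg x (add_sub_cancel_right n g)
  right_inv x := by ext n; exact congrArg x (sub_add_cancel n g)
  norm_map' x := by
    rw [lp.norm_eq_tsum_rpow (by norm_num), lp.norm_eq_tsum_rpow (by norm_num)]
    congr 1
    exact (Equiv.subRight g).tsum_eq fun n => ‖x n‖ ^ (2 : ENNReal).toReal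

lemma translation_apply (g : G) (x : ℓ²(G, ℂ)) (n : G) : translation g x n = x (n - g) := rfl

lemma commute_translation (g h : G) : Commute (translation g) (translation h) := by
  ext x n
  exact congrArg x (sub_right_comm n g h)

lemma translation_mem_supportedOn {I : Set G} {g : G} (h : ∀ n ∈ I, n + g ∈ I) {x : ℓ²(G, ℂ)}
    (hx : x ∈ supportedOn I) : translation g x ∈ supportedOn I := fun n hn =>
  hx _ fun hI => hn (by simpa using h _ hI)

end SequenceSpace

section SzegoVector

lemma hasSum_prod_and_summable_norm {R κ : Type*} [NormedCommRing R] [CompleteSpace R] {d : ℕ}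
    {g : Fin d → κ → R} {a : Fin d → R} (hg : ∀ j, HasSum (g j) (a j))
    (hg' : ∀ j, Summable fun n => ‖g j n‖) :
    HasSum (fun n : Fin d → κ => ∏ j, g j (n j)) (∏ j, a j) ∧
      Summable fun n : Fin d → κ => ‖∏ j, g j (n j)‖ := by
  induction d with
  | zero => exact ⟨by simp, (hasSum_unique _).summable⟩
  | succ d ih =>
    obtain ⟨tail_hasSum, tail_summable⟩ := ih (fun j => hg j.succ) fun j => hg' j.succ
    have norm_summable := (hg' 0).mul_norm tail_summable
    have cons_hasSum := (hg 0).mul tail_hasSum norm_summable.of_norm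
    rw [← (Fin.consEquiv fun _ => κ).hasSum_iff, ← (Fin.consEquiv fun _ => κ).summable_iff]
    simp only [Function.comp_def, Fin.consEquiv_apply, Fin.prod_univ_succ, Fin.cons_zero,
      Fin.cons_succ]
    exact ⟨cons_hasSum, norm_summable⟩

/-- The power `a ^ n`, extended by zero to negative exponents: the coefficient at `n ∈ ℤ` of
the geometric series of ratio `a`. -/
noncomputable def oneSidedPow (a : ℂ) (n : ℤ) : ℂ := if 0 ≤ n then a ^ n.toNat else 0

lemma oneSidedPow_natCast (a : ℂ) (n : ℕ) : oneSidedPow a n = a ^ n := by simp [oneSidedPow]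

lemma oneSidedPow_of_neg (a : ℂ) {n : ℤ} (hn : n < 0) : oneSidedPow a n = 0 := if_neg hn.not_ge

lemma oneSidedPow_add_one (a : ℂ) {n : ℤ} (hn : 0 ≤ n) :
    oneSidedPow a (n + 1) = a * oneSidedPow a n := by
  lift n to ℕ using hn
  rw [oneSidedPow_natCast, ← pow_succ', ← oneSidedPow_natCast, Nat.cast_succ]

lemma oneSidedPow_mul (a b : ℂ) (n : ℤ) :
    oneSidedPow (a * b) n = oneSidedPow a n * oneSidedPow b n := by
  unfold oneSidedPow
  split_ifs <;> simp [mul_pow]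

lemma conj_oneSidedPow (a : ℂ) (n : ℤ) : conj (oneSidedPow a n) = oneSidedPow (conj a) n := by
  unfold oneSidedPow
  split_ifs <;> simp

lemma oneSidedPow_eq_zero_of_notMem_range (a : ℂ) {n : ℤ}
    (hn : n ∉ Set.range ((↑) : ℕ → ℤ)) : oneSidedPow a n = 0 :=
  oneSidedPow_of_neg a <| not_le.1 fun h => hn ⟨n.toNat, Int.toNat_of_nonneg h⟩

lemma hasSum_oneSidedPow {a : ℂ} (ha : ‖a‖ < 1) : HasSum (oneSidedPow a) (1 - a)⁻¹ := by
  rw [← Nat.cast_injective.hasSum_iff fun n => oneSidedPow_eq_zero_of_notMem_range a]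
  simpa only [Function.comp_def, oneSidedPow_natCast] using hasSum_geometric_of_norm_lt_one ha

lemma summable_norm_oneSidedPow {a : ℂ} (ha : ‖a‖ < 1) : Summable fun n => ‖oneSidedPow a n‖ := by
  rw [← Nat.cast_injective.summable_iff fun n hn => by
    rw [oneSidedPow_eq_zero_of_notMem_range a hn, norm_zero]]
  simpa only [Function.comp_def, oneSidedPow_natCast] using
    summable_norm_geometric_of_norm_lt_one ha

variable {d : ℕ} {z ζ : Fin d → ℂ}

lemma norm_mul_conj_lt_one (hz : z ∈ Polydisk d) (hζ : ζ ∈ Polydisk d) (j : Fin d) :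
    ‖z j * conj (ζ j)‖ < 1 := by
  rw [norm_mul, RCLike.norm_conj]
  exact mul_lt_one_of_nonneg_of_lt_one_left (norm_nonneg _) (hz j) (hζ j).le

lemma memℓp_prod_oneSidedPow (hz : z ∈ Polydisk d) :
    Memℓp (fun n : Fin d → ℤ => ∏ j, oneSidedPow (conj (z j)) (n j)) 2 := by
  rw [memℓp_gen_iff (by norm_num)]
  refine (hasSum_prod_and_summable_norm
    (fun j => hasSum_oneSidedPow (norm_mul_conj_lt_one hz hz j))
    fun j => summable_norm_oneSidedPow (norm_mul_conj_lt_one hz hz j)).2.congr fun n => ?_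
  simp only [ENNReal.toReal_ofNat, Real.rpow_ofNat, oneSidedPow_mul, prod_mul_distrib,
    ← conj_oneSidedPow, norm_mul, ← map_prod, RCLike.norm_conj, sq]

open Classical in
/-- The Szegő kernel vector of `z`, a sequence on `ℤ^d` carried by the nonnegative orthant; outside
the polydisk it takes the junk value `0`. -/
noncomputable def szegoVector (z : Fin d → ℂ) : ℓ²(Fin d → ℤ, ℂ) :=
  if hz : z ∈ Polydisk d then ⟨_, memℓp_prod_oneSidedPow hz⟩ else 0

lemma szegoVector_apply (hz : z ∈ Polydisk d) (n : Fin d → ℤ) :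
    szegoVector z n = ∏ j, oneSidedPow (conj (z j)) (n j) := by
  rw [szegoVector, dif_pos hz]

lemma inner_szegoVector (hz : z ∈ Polydisk d) (hζ : ζ ∈ Polydisk d) :
    ⟪szegoVector z, szegoVector ζ⟫_ℂ = (∏ j, (1 - z j * conj (ζ j)))⁻¹ := by
  rw [lp.inner_eq_tsum, ← prod_inv_distrib, ← (hasSum_prod_and_summable_norm
    (fun j => hasSum_oneSidedPow (norm_mul_conj_lt_one hz hζ j))
    fun j => summable_norm_oneSidedPow (norm_mul_conj_lt_one hz hζ j)).1.tsum_eq]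
  refine tsum_congr fun n => ?_
  simp only [szegoVector_apply hz, szegoVector_apply hζ, RCLike.inner_apply, map_prod,
    oneSidedPow_mul, conj_oneSidedPow, Complex.conj_conj, prod_mul_distrib, mul_comm]

/-- The multi-indices that are nonnegative in every coordinate outside `S`; for `S = ∅` this is the
nonnegative orthant. -/
def halfLattice (S : Set (Fin d)) : Set (Fin d → ℤ) := {n | ∀ k ∉ S, 0 ≤ n k}

variable {S : Set (Fin d)} {n : Fin d → ℤ} {j : Fin d}

lemma halfLattice_empty_subset : halfLattice (∅ : Set (Fin d)) ⊆ halfLattice S :=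
  fun _ hn k _ => hn k (Set.notMem_empty k)

lemma add_single_mem_halfLattice (hn : n ∈ halfLattice S) (j : Fin d) :
    n + Pi.single j 1 ∈ halfLattice S := fun k hk =>
  add_nonneg (hn k hk) (Pi.single_nonneg.2 zero_le_one k : (0 : Fin d → ℤ) k ≤ _)

lemma add_neg_single_mem_halfLattice (hn : n ∈ halfLattice S) (hj : j ∈ S) :
    n + -Pi.single j 1 ∈ halfLattice S := fun k hk => by
  simpa [ne_of_mem_of_not_mem hj hk |>.symm] using hn k hk

lemma sub_single_mem_halfLattice_empty (hn : n ∈ halfLattice ∅) (hj : j ∉ S)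
    (h : n - Pi.single j 1 ∈ halfLattice S) : n - Pi.single j 1 ∈ halfLattice ∅ := fun k _ => by
  obtain rfl | hkj := eq_or_ne k j
  · exact h k hj
  · simpa [hkj] using hn k (Set.notMem_empty k)

lemma szegoVector_mem (z : Fin d → ℂ) : szegoVector z ∈ supportedOn (halfLattice ∅) := by
  by_cases hz : z ∈ Polydisk d
  · intro n hn
    obtain ⟨j, hj⟩ : ∃ j, n j < 0 := by simpa [halfLattice] using hn
    rw [szegoVector_apply hz]
    exact prod_eq_zero (mem_univ j) (oneSidedPow_of_neg _ hj)
  · rw [szegoVector, dif_neg hz]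
    exact zero_mem _

lemma szegoVector_add_single (hz : z ∈ Polydisk d) (hn : n ∈ halfLattice ∅) (j : Fin d) :
    szegoVector z (n + Pi.single j 1) = conj (z j) * szegoVector z n := by
  rw [szegoVector_apply hz, szegoVector_apply hz, ← mul_prod_erase _ _ (mem_univ j),
    ← mul_prod_erase _ (fun i => oneSidedPow (conj (z i)) (n i)) (mem_univ j), ← mul_assoc,
    Pi.add_apply, Pi.single_eq_same, oneSidedPow_add_one _ (hn j (Set.notMem_empty j))]
  refine congrArg _ (prod_congr rfl fun i hi => ?_)
  rw [Pi.add_apply, Pi.single_eq_of_ne (ne_of_mem_erase hi), add_zero]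

lemma inner_szegoVector_translation (hz : z ∈ Polydisk d) (j : Fin d) {h : ℓ²(Fin d → ℤ, ℂ)}
    (hh : h ∈ supportedOn (halfLattice ∅)) :
    ⟪szegoVector z, translation (Pi.single j 1) h⟫_ℂ = z j * ⟪szegoVector z, h⟫_ℂ := by
  rw [lp.inner_eq_tsum, lp.inner_eq_tsum, ← tsum_mul_left,
    ← (Equiv.addRight (Pi.single j (1 : ℤ))).tsum_eq]
  refine tsum_congr fun n => ?_
  rw [Equiv.coe_addRight, translation_apply, add_sub_cancel_right]
  by_cases hn : n ∈ halfLattice ∅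
  · rw [szegoVector_add_single hz hn, RCLike.inner_apply, RCLike.inner_apply, map_mul,
      Complex.conj_conj]
    ring
  · rw [hh n hn, inner_zero_right, inner_zero_right, mul_zero]

end SzegoVector

section PolynomialSymbols

open ContinuousLinearMap MvPolynomial

section Multipliers

variable {E γ ι : Type*} [NormedAddCommGroup E] [InnerProductSpace ℂ E] {D : Set γ} {k : γ → E}
  {H W : Submodule ℂ E} {U : E →L[ℂ] E} {Φ : MvPolynomial ι ℂ →ₐ[ℂ] E →L[ℂ] E}

lemma algHom_apply_mem (hW : ∀ j, ∀ x ∈ W, Φ (X j) x ∈ W) (p : MvPolynomial ι ℂ) :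
    ∀ x ∈ W, Φ p x ∈ W := by
  induction p using MvPolynomial.induction_on with
  | C c =>
    intro x hx
    rw [← algebraMap_eq, AlgHom.commutes, Algebra.algebraMap_eq_smul_one]
    exact W.smul_mem c hx
  | add p q hp hq =>
    intro x hx
    rw [map_add]
    exact W.add_mem (hp x hx) (hq x hx)
  | mul_X p j hp =>
    intro x hx
    rw [map_mul]
    exact hp _ (hW j x hx)

lemma IsMultiplierOn.algHom {a : γ → ι → ℂ}
    (hΦ : ∀ j, IsMultiplierOn D k H (Φ (X j)) fun z => a z j) (p : MvPolynomial ι ℂ) :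
    IsMultiplierOn D k H (Φ p) fun z => eval (a z) p := by
  refine ⟨algHom_apply_mem (fun j => (hΦ j).apply_mem) p, fun z hz => ?_⟩
  induction p using MvPolynomial.induction_on with
  | C c =>
    intro h _
    rw [← algebraMap_eq, AlgHom.commutes, Algebra.algebraMap_eq_smul_one, algebraMap_eq, eval_C]
    exact inner_smul_right _ _ _
  | add p q hp hq =>
    intro h hh
    rw [map_add, map_add, add_mul, ← hp h hh, ← hq h hh]
    exact inner_add_right _ _ _
  | mul_X p j hp =>
    intro h hh
    rw [map_mul, map_mul, eval_X, mul_assoc, ← (hΦ j).inner_apply z hz h hh]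
    exact hp _ ((hΦ j).apply_mem h hh)

lemma IsMultiplierOn.restrict {a : γ → ℂ} (hU : IsMultiplierOn D k H U a)
    (hW : ∀ x ∈ W, U x ∈ W) (hk : ∀ z, k z ∈ W) :
    IsMultiplierOn D (fun z => (⟨k z, hk z⟩ : W)) (H.comap W.subtype) (U.restrict hW) a :=
  ⟨fun h hh => hU.apply_mem h hh, fun z hz h hh => hU.inner_apply z hz h hh⟩

lemma norm_restrict_le (hW : ∀ x ∈ W, U x ∈ W) : ‖U.restrict hW‖ ≤ ‖U‖ :=
  opNorm_le_bound _ (norm_nonneg _) fun x => U.le_opNorm x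

lemma norm_adjoint_apply_of_surjective [CompleteSpace E] (hU : ∀ x, ‖U x‖ = ‖x‖)
    (hU' : Function.Surjective U) (x : E) : ‖U.adjoint x‖ = ‖x‖ := by
  obtain ⟨y, rfl⟩ := hU' x
  have adjoint_apply_apply : U.adjoint (U y) = y :=
    congr($((norm_map_iff_adjoint_comp_self U).1 hU) y)
  rw [adjoint_apply_apply, hU]

end Multipliers

variable {d : ℕ} {S : Set (Fin d)}
  {Φ : MvPolynomial (Fin d) ℂ →ₐ[ℂ] ℓ²(Fin d → ℤ, ℂ) →L[ℂ] ℓ²(Fin d → ℤ, ℂ)}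

lemma exists_translation_calculus (d : ℕ) :
    ∃ Φ : MvPolynomial (Fin d) ℂ →ₐ[ℂ] ℓ²(Fin d → ℤ, ℂ) →L[ℂ] ℓ²(Fin d → ℤ, ℂ),
      (∀ j x, Φ (X j) x = translation (Pi.single j 1) x) ∧ ∀ p C, 0 ≤ C →
        (∀ w, (∀ j, ‖w j‖ = 1) → ‖eval w p‖ ≤ C) → ‖Φ p‖ ≤ C := by
  obtain ⟨Φ, hX, hΦ⟩ := exists_algHom_norm_le_of_commute
    (U := fun j : Fin d => Unitary.linearIsometryEquiv.symm (translation (Pi.single j (1 : ℤ))))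
    fun i j => by rw [commute_iff_eq, ← map_mul, (commute_translation _ _).eq, map_mul]
  refine ⟨Φ, fun j x => ?_, hΦ⟩
  rw [hX, Unitary.coe_symm_linearIsometryEquiv_apply]
  rfl

lemma apply_mem_supportedOn_halfLattice
    (hX : ∀ j x, Φ (X j) x = translation (Pi.single j 1) x) (p : MvPolynomial (Fin d) ℂ) :
    ∀ x ∈ supportedOn (halfLattice S), Φ p x ∈ supportedOn (halfLattice S) :=
  algHom_apply_mem (fun j x hx => by
    rw [hX]
    exact translation_mem_supportedOn (fun n hn => add_single_mem_halfLattice hn j) hx) p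

lemma isMultiplierOn_szegoVector
    (hX : ∀ j x, Φ (X j) x = translation (Pi.single j 1) x) (p : MvPolynomial (Fin d) ℂ) :
    IsMultiplierOn (Polydisk d) szegoVector (supportedOn (halfLattice ∅)) (Φ p)
      fun z => eval z p :=
  IsMultiplierOn.algHom (fun j => ⟨apply_mem_supportedOn_halfLattice hX (X j), fun z hz h hh => by
    rw [hX]
    exact inner_szegoVector_translation hz j hh⟩) p

section Shift

variable {j : Fin d} {U : supportedOn (halfLattice S) →L[ℂ] supportedOn (halfLattice S)}

lemma norm_adjoint_shift_apply (hj : j ∈ S)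
    (hU : ∀ x, (U x : ℓ²(Fin d → ℤ, ℂ)) = translation (Pi.single j 1) (x : ℓ²(Fin d → ℤ, ℂ)))
    (x : supportedOn (halfLattice S)) : ‖U.adjoint x‖ = ‖x‖ := by
  refine norm_adjoint_apply_of_surjective (fun x => ?_) (fun y => ?_) x
  · exact (congrArg norm (hU x)).trans (LinearIsometryEquiv.norm_map _ _)
  · refine ⟨⟨translation (-Pi.single j 1) y, translation_mem_supportedOn
      (fun n hn => add_neg_single_mem_halfLattice hn hj) y.2⟩, Subtype.ext ?_⟩
    ext n
    rw [hU, translation_apply, translation_apply, sub_neg_eq_add, sub_add_cancel]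

lemma shift_apply_mem_orthogonal (hj : j ∉ S)
    (hU : ∀ x, (U x : ℓ²(Fin d → ℤ, ℂ)) = translation (Pi.single j 1) (x : ℓ²(Fin d → ℤ, ℂ))) :
    ∀ e ∈ (supportedIn (halfLattice S) (halfLattice ∅))ᗮ,
      U e ∈ (supportedIn (halfLattice S) (halfLattice ∅))ᗮ := by
  simp only [mem_supportedIn_orthogonal halfLattice_empty_subset]
  intro e he n hn
  rw [hU, translation_apply]
  by_cases h : n - Pi.single j 1 ∈ halfLattice S
  · exact he _ (sub_single_mem_halfLattice_empty hn hj h)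
  · exact e.2 _ h

end Shift

theorem hasPickSplitting_eval (S : Set (Fin d)) {p : MvPolynomial (Fin d) ℂ}
    (hp : ∀ w : Fin d → ℂ, (∀ j, ‖w j‖ = 1) → ‖eval w p‖ ≤ 1) :
    HasPickSplitting S fun z => eval z p := by
  obtain ⟨Φ, hX, hΦ⟩ := exists_translation_calculus d
  have mem_W (z : Fin d → ℂ) : szegoVector z ∈ supportedOn (halfLattice S) :=
    supportedOn_mono halfLattice_empty_subset (szegoVector_mem z)
  let R (q : MvPolynomial (Fin d) ℂ) :=
    (Φ q).restrict (apply_mem_supportedOn_halfLattice (S := S) hX q)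
  have multiplier (q : MvPolynomial (Fin d) ℂ) : IsMultiplierOn (Polydisk d)
      (fun z => ⟨szegoVector z, mem_W z⟩) (supportedIn (halfLattice S) (halfLattice ∅)) (R q)
      fun z => eval z q :=
    (isMultiplierOn_szegoVector hX q).restrict _ mem_W
  have multiplier_X (j : Fin d) : IsMultiplierOn (Polydisk d)
      (fun z => ⟨szegoVector z, mem_W z⟩) (supportedIn (halfLattice S) (halfLattice ∅)) (R (X j))
      fun z => z j := by
    simpa only [eval_X] using multiplier (X j)
  have commute_R (q r : MvPolynomial (Fin d) ℂ) : Commute (R q) (R r) := by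
    ext x : 2
    exact congr($(((Commute.all q r).map Φ).eq) (x : ℓ²(Fin d → ℤ, ℂ)))
  have norm_R_le : ‖R p‖ ≤ 1 := (norm_restrict_le _).trans (hΦ p 1 zero_le_one hp)
  obtain ⟨K, L, hK, hL, hKS, hLS, hKL⟩ := exists_kernel_splitting
    norm_R_le (multiplier p) fun z _ => szegoVector_mem z
  refine ⟨K, L, hK, hL,
    fun j hj => hKS _ _ (multiplier_X j) (commute_R p (X j))
      (norm_adjoint_shift_apply hj fun x => hX j x),
    fun j hj => hLS _ _ (multiplier_X j) (commute_R p (X j))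
      (fun x => (congrArg norm (hX j x)).trans (LinearIsometryEquiv.norm_map _ _))
      (shift_apply_mem_orthogonal hj fun x => hX j x), fun z hz ζ hζ => ?_⟩
  rw [← hKL z hz ζ hζ, div_eq_mul_inv, ← inner_szegoVector hz hζ]
  rfl

end PolynomialSymbols

section PolynomialApproximation

open Filter

lemma polydisk_eq_ball (d : ℕ) : Polydisk d = Metric.ball 0 1 := by
  ext z
  simp only [Polydisk, Set.mem_ofPred_eq, mem_ball_zero_iff, pi_norm_lt_iff one_pos]

lemma cons_mem_polydisk {d : ℕ} {a : ℂ} {y : Fin d → ℂ} (ha : ‖a‖ < 1) (hy : y ∈ Polydisk d) :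
    (Fin.cons a y : Fin (d + 1) → ℂ) ∈ Polydisk (d + 1) :=
  Fin.cases ha hy

lemma norm_smul_lt_one {E : Type*} [SeminormedAddCommGroup E] [NormedSpace ℂ E] {r : ℂ} {z : E}
    (hr : ‖r‖ < 1) (hz : ‖z‖ ≤ 1) : ‖r • z‖ < 1 :=
  (norm_smul_le r z).trans_lt (mul_lt_one_of_nonneg_of_lt_one_left (norm_nonneg r) hr hz)

lemma norm_taylor_coeff_le {g : ℂ → ℂ} {C : ℝ} (hg : DifferentiableOn ℂ g (Metric.ball 0 1))
    (hC : ∀ z ∈ Metric.ball 0 1, ‖g z‖ ≤ C) (n : ℕ) :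
    ‖(n.factorial : ℂ)⁻¹ * iteratedDeriv n g 0‖ ≤ C := by
  have cauchy_bound : ∀ R : ℝ, 0 < R → R < 1 →
      ‖(n.factorial : ℂ)⁻¹ * iteratedDeriv n g 0‖ ≤ C / R ^ n := fun R hR hR1 => by
    have closedBall_subset := Metric.closedBall_subset_ball (x := (0 : ℂ)) hR1
    have := norm_iteratedDeriv_le_of_forall_mem_sphere_norm_le n hR
      (hg.mono (closure_ball (0 : ℂ) hR.ne' ▸ closedBall_subset)).diffContOnCl
      fun z hz => hC z (closedBall_subset (Metric.sphere_subset_closedBall hz))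
    rwa [norm_mul, norm_inv, norm_natCast, inv_mul_le_iff₀ (by positivity), ← mul_div_assoc]
  have tendsto_bound : Tendsto (fun R : ℝ => C / R ^ n) (𝓝[<] 1) (𝓝 C) := by
    have : ContinuousAt (fun R : ℝ => C / R ^ n) 1 := by fun_prop (disch := simp)
    simpa using this.tendsto.mono_left nhdsWithin_le_nhds
  refine ge_of_tendsto tendsto_bound ?_
  filter_upwards [Ioo_mem_nhdsLT one_pos] with R hR using cauchy_bound R hR.1 hR.2

lemma exists_hasSum_pow {g : ℂ → ℂ} {C : ℝ} (hg : DifferentiableOn ℂ g (Metric.ball 0 1))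
    (hC : ∀ z ∈ Metric.ball 0 1, ‖g z‖ ≤ C) :
    ∃ a : ℕ → ℂ, (∀ n, ‖a n‖ ≤ C) ∧
      ∀ z ∈ Metric.ball 0 1, HasSum (fun n => a n * z ^ n) (g z) := by
  refine ⟨_, norm_taylor_coeff_le hg hC, fun z hz => ?_⟩
  refine (hasSum_taylorSeries_on_ball hg hz).congr_fun fun n => ?_
  simp only [sub_zero, smul_eq_mul]
  ring

lemma sum_pow_mul_basis_eval {ω : ℂ} {N : ℕ} (hω : IsPrimitiveRoot ω N) (hN : 0 < N) (m : ℕ)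
    (z : ℂ) :
    ∑ k ∈ range N, (ω ^ k) ^ m * (Lagrange.basis (range N) (ω ^ ·) k).eval z = z ^ (m % N) := by
  have interpolate_eq := Lagrange.eq_interpolate_of_eval_eq (s := range N) (v := (ω ^ ·))
    (f := Polynomial.X ^ (m % N)) (fun k => (ω ^ k) ^ m) hω.injOn_pow
    (by simpa using Nat.mod_lt m hN) fun k _ => by
      rw [Polynomial.eval_pow, Polynomial.eval_X, pow_right_comm, hω.eq_orderOf,
        pow_mod_orderOf, pow_right_comm]
  simpa [Lagrange.interpolate_apply, Polynomial.eval_finsetSum] using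
    (congrArg (Polynomial.eval z) interpolate_eq).symm

/-- Interpolation at the points `r ω ^ k` replaces `z ^ m` by `z ^ (m % N)` in the power series
of `g (r z)`, so that only the terms with `m ≥ N` contribute to the error. -/
lemma norm_sub_sum_mul_basis_eval_le {g : ℂ → ℂ} {C : ℝ}
    (hg : DifferentiableOn ℂ g (Metric.ball 0 1)) (hC : ∀ z ∈ Metric.ball 0 1, ‖g z‖ ≤ C)
    {r z ω : ℂ} (hr : ‖r‖ < 1) (hz : ‖z‖ ≤ 1) {N : ℕ} (hω : IsPrimitiveRoot ω N) (hN : 0 < N) :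
    ‖g (r * z) - ∑ k ∈ range N, g (r * ω ^ k) * (Lagrange.basis (range N) (ω ^ ·) k).eval z‖
      ≤ C * 2 * (‖r‖ ^ N * (1 - ‖r‖)⁻¹) := by
  obtain ⟨a, norm_a, hasSum_g⟩ := exists_hasSum_pow hg hC
  have mem_ball {w : ℂ} (hw : ‖w‖ ≤ 1) : r * w ∈ Metric.ball (0 : ℂ) 1 :=
    mem_ball_zero_iff.2 (norm_smul_lt_one hr hw)
  have hasSum_interpolant : HasSum (fun m => a m * r ^ m * z ^ (m % N))
      (∑ k ∈ range N, g (r * ω ^ k) * (Lagrange.basis (range N) (ω ^ ·) k).eval z) := by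
    refine (hasSum_sum fun k _ => (hasSum_g (r * ω ^ k) (mem_ball ?_)).mul_right _).congr_fun
      fun m => ?_
    · rw [norm_pow, hω.norm'_eq_one hN.ne', one_pow]
    · rw [← sum_pow_mul_basis_eval hω hN, mul_sum]
      exact sum_congr rfl fun k _ => by ring
  have hasSum_error := (hasSum_nat_add_iff' N).2
    ((hasSum_g _ (mem_ball hz)).sub hasSum_interpolant)
  have initial_terms : ∑ m ∈ range N, (a m * (r * z) ^ m - a m * r ^ m * z ^ (m % N)) = 0 :=
    sum_eq_zero fun m hm => by rw [Nat.mod_eq_of_lt (mem_range.1 hm)]; ring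
  rw [initial_terms, sub_zero] at hasSum_error
  refine hasSum_error.norm_le_of_bounded
    (((hasSum_geometric_of_lt_one (norm_nonneg r) hr).mul_left (‖r‖ ^ N)).mul_left (C * 2))
    fun m => ?_
  have norm_pow_sub_pow_le (i j : ℕ) : ‖z ^ i - z ^ j‖ ≤ 2 := by
    refine (norm_sub_le _ _).trans ?_
    rw [norm_pow, norm_pow, ← one_add_one_eq_two]
    exact add_le_add (pow_le_one₀ (norm_nonneg z) hz) (pow_le_one₀ (norm_nonneg z) hz)
  calc ‖a (m + N) * (r * z) ^ (m + N) - a (m + N) * r ^ (m + N) * z ^ ((m + N) % N)‖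
      = ‖a (m + N)‖ * ‖z ^ (m + N) - z ^ ((m + N) % N)‖ * ‖r‖ ^ (m + N) := by
        rw [← norm_pow, ← norm_mul, ← norm_mul]
        congr 1
        ring
    _ ≤ C * 2 * ‖r‖ ^ (m + N) := by
        gcongr
        exacts [(norm_nonneg _).trans (norm_a 0), norm_a _, norm_pow_sub_pow_le _ _]
    _ = C * 2 * (‖r‖ ^ N * ‖r‖ ^ m) := by rw [pow_add, mul_comm (‖r‖ ^ m)]

/-- The nodes and weights depend only on `C`, `r` and `ε`, which allows the formula to be applied
to all slices of a function of several variables at once. -/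
lemma exists_interpolation_formula (C : ℝ) {r : ℂ} (hr : ‖r‖ < 1) {ε : ℝ} (hε : 0 < ε) :
    ∃ (N : ℕ) (w : ℕ → ℂ) (l : ℕ → Polynomial ℂ), (∀ k, ‖w k‖ < 1) ∧
      ∀ g : ℂ → ℂ, DifferentiableOn ℂ g (Metric.ball 0 1) →
        (∀ z ∈ Metric.ball 0 1, ‖g z‖ ≤ C) → ∀ z, ‖z‖ ≤ 1 →
        ‖g (r * z) - ∑ k ∈ range N, g (w k) * (l k).eval z‖ ≤ ε := by
  have tendsto_error : Tendsto (fun N => C * 2 * (‖r‖ ^ N * (1 - ‖r‖)⁻¹)) atTop (𝓝 0) := by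
    simpa using ((tendsto_pow_atTop_nhds_zero_of_lt_one (norm_nonneg r) hr).mul_const
      (1 - ‖r‖)⁻¹).const_mul (C * 2)
  obtain ⟨N, error_le, N_pos⟩ :=
    ((tendsto_error.eventually_le_const hε).and (eventually_gt_atTop 0)).exists
  have hω := isPrimitiveRoot_exp N N_pos.ne'
  refine ⟨N, fun k => r * _ ^ k, _, fun k => norm_smul_lt_one hr ?_, fun g hg hC z hz =>
    (norm_sub_sum_mul_basis_eval_le hg hC hr hz hω N_pos).trans error_le⟩
  rw [norm_pow, hω.norm'_eq_one N_pos.ne', one_pow]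

lemma exists_sum_norm_eval_le (s : Finset ℕ) (l : ℕ → Polynomial ℂ) :
    ∃ B, ∀ z : ℂ, ‖z‖ ≤ 1 → ∑ k ∈ s, ‖(l k).eval z‖ ≤ B := by
  obtain ⟨B, hB⟩ := (isCompact_closedBall (0 : ℂ) 1).exists_bound_of_continuousOn
    (f := fun z => ∑ k ∈ s, ‖(l k).eval z‖) (by fun_prop)
  exact ⟨B, fun z hz => (Real.le_norm_self _).trans (hB z (mem_closedBall_zero_iff.2 hz))⟩

lemma eval_rename_succ_mul_aeval {R : Type*} [CommSemiring R] {d : ℕ} (z : Fin (d + 1) → R)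
    (p : MvPolynomial (Fin d) R) (l : Polynomial R) :
    MvPolynomial.eval z (MvPolynomial.rename Fin.succ p * Polynomial.aeval (MvPolynomial.X 0) l)
      = MvPolynomial.eval (Fin.tail z) p * l.eval (z 0) := by
  rw [map_mul, MvPolynomial.eval_rename]
  congr 1
  rw [← MvPolynomial.coe_aeval_eq_eval, RingHom.coe_coe, ← Polynomial.aeval_algHom_apply,
    MvPolynomial.aeval_X, Polynomial.coe_aeval_eq_eval]

lemma norm_tail_le_one {d : ℕ} {z : Fin (d + 1) → ℂ} (hz : ‖z‖ ≤ 1) : ‖Fin.tail z‖ ≤ 1 :=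
  (pi_norm_le_iff_of_nonneg zero_le_one).2 fun j => (norm_le_pi_norm z j.succ).trans hz

lemma exists_interpolation_formula_first_variable {d : ℕ} {f : (Fin (d + 1) → ℂ) → ℂ} {C : ℝ}
    (hf : DifferentiableOn ℂ f (Polydisk (d + 1))) (hC : ∀ z ∈ Polydisk (d + 1), ‖f z‖ ≤ C)
    {r : ℂ} (hr : ‖r‖ < 1) {ε : ℝ} (hε : 0 < ε) :
    ∃ (N : ℕ) (w : ℕ → ℂ) (l : ℕ → Polynomial ℂ), (∀ k, ‖w k‖ < 1) ∧ ∀ z, ‖z‖ ≤ 1 →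
      ‖f (r • z) - ∑ k ∈ range N, f (Fin.cons (w k) (r • Fin.tail z)) * (l k).eval (z 0)‖ ≤ ε := by
  obtain ⟨N, w, l, norm_w, interpolation⟩ := exists_interpolation_formula C hr hε
  refine ⟨N, w, l, norm_w, fun z hz => ?_⟩
  have cons_mem (x : ℂ) (hx : x ∈ Metric.ball 0 1) :
      (Fin.cons x (r • Fin.tail z) : Fin (d + 1) → ℂ) ∈ Polydisk (d + 1) :=
    cons_mem_polydisk (mem_ball_zero_iff.1 hx)
      (polydisk_eq_ball d ▸ mem_ball_zero_iff.2 (norm_smul_lt_one hr (norm_tail_le_one hz)))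
  rw [← Fin.cons_self_tail (r • z)]
  exact interpolation (fun x => f (Fin.cons x (r • Fin.tail z)))
    (hf.comp (differentiable_finCons'.2 ⟨by fun_prop, by fun_prop⟩).differentiableOn cons_mem)
    (fun x hx => hC _ (cons_mem x hx)) (z 0) ((norm_le_pi_norm z 0).trans hz)

theorem exists_mvPolynomial_norm_sub_le {d : ℕ} {f : (Fin d → ℂ) → ℂ} {C : ℝ}
    (hf : DifferentiableOn ℂ f (Polydisk d)) (hC : ∀ z ∈ Polydisk d, ‖f z‖ ≤ C)
    {r : ℂ} (hr : ‖r‖ < 1) {ε : ℝ} (hε : 0 < ε) :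
    ∃ p : MvPolynomial (Fin d) ℂ, ∀ z, ‖z‖ ≤ 1 → ‖f (r • z) - MvPolynomial.eval z p‖ ≤ ε := by
  induction d generalizing ε with
  | zero =>
    refine ⟨MvPolynomial.C (f 0), fun z _ => ?_⟩
    rw [Subsingleton.elim (r • z) 0, MvPolynomial.eval_C, sub_self, norm_zero]
    exact hε.le
  | succ d ih =>
    obtain ⟨N, w, l, norm_w, first_variable⟩ :=
      exists_interpolation_formula_first_variable hf hC hr (half_pos hε)
    obtain ⟨B, sum_norm_le⟩ := exists_sum_norm_eval_le (range N) l
    obtain ⟨δ, δ_pos, hδ⟩ := exists_pos_mul_lt (half_pos hε) B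
    have approximate_slice (k : ℕ) : ∃ p : MvPolynomial (Fin d) ℂ, ∀ y, ‖y‖ ≤ 1 →
        ‖f (Fin.cons (w k) (r • y)) - MvPolynomial.eval y p‖ ≤ δ :=
      ih (f := fun y => f (Fin.cons (w k) y))
        (hf.comp (differentiable_finCons'.2 ⟨by fun_prop, by fun_prop⟩).differentiableOn
          fun y hy => cons_mem_polydisk (norm_w k) hy)
        (fun y hy => hC _ (cons_mem_polydisk (norm_w k) hy)) δ_pos
    choose p hp using approximate_slice
    refine ⟨∑ k ∈ range N, MvPolynomial.rename Fin.succ (p k) *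
      Polynomial.aeval (MvPolynomial.X 0) (l k), fun z hz => ?_⟩
    have other_variables : ‖∑ k ∈ range N, f (Fin.cons (w k) (r • Fin.tail z)) * (l k).eval (z 0)
        - ∑ k ∈ range N, MvPolynomial.eval (Fin.tail z) (p k) * (l k).eval (z 0)‖ ≤ ε / 2 :=
      calc
        _ ≤ ∑ k ∈ range N, δ * ‖(l k).eval (z 0)‖ := by
          rw [← sum_sub_distrib]
          refine norm_sum_le_of_le _ fun k _ => ?_
          rw [← sub_mul, norm_mul]
          gcongr
          exact hp k _ (norm_tail_le_one hz)
        _ ≤ B * δ := by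
          rw [← mul_sum, mul_comm]
          gcongr
          exact sum_norm_le _ ((norm_le_pi_norm z 0).trans hz)
        _ ≤ ε / 2 := hδ.le
    simp only [map_sum, eval_rename_succ_mul_aeval]
    exact (norm_sub_le_norm_sub_add_norm_sub _ _ _).trans
      ((add_le_add (first_variable z hz) other_variables).trans_eq (add_halves ε))

lemma hasPickSplitting_comp_smul {d : ℕ} (S : Set (Fin d)) {f : (Fin d → ℂ) → ℂ}
    (hf : DifferentiableOn ℂ f (Polydisk d)) (hb : ∀ z ∈ Polydisk d, ‖f z‖ ≤ 1)
    {r : ℂ} (hr : ‖r‖ < 1) : HasPickSplitting S fun z => f (r • z) := by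
  let ε (n : ℕ) : ℝ := 1 / (n + 1)
  have tendsto_ε : Tendsto ε atTop (𝓝 0) := tendsto_one_div_add_atTop_nhds_zero_nat
  have ε_pos (n : ℕ) : 0 < ε n := Nat.one_div_pos_of_nat
  choose p hp using fun n => exists_mvPolynomial_norm_sub_le hf hb hr (ε_pos n)
  have norm_eval_le (n : ℕ) (z : Fin d → ℂ) (hz : ∀ j, ‖z j‖ = 1) :
      ‖MvPolynomial.eval z (MvPolynomial.C (1 + ε n : ℂ)⁻¹ * p n)‖ ≤ 1 := by
    have norm_z : ‖z‖ ≤ 1 := (pi_norm_le_iff_of_nonneg zero_le_one).2 fun j => (hz j).le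
    have norm_f := hb (r • z)
      (polydisk_eq_ball d ▸ mem_ball_zero_iff.2 (norm_smul_lt_one hr norm_z))
    have norm_one_add : ‖(1 + ε n : ℂ)‖ = 1 + ε n := by
      exact_mod_cast Complex.norm_of_nonneg (add_pos one_pos (ε_pos n)).le
    rw [map_mul, MvPolynomial.eval_C, norm_mul, norm_inv, norm_one_add,
      inv_mul_le_iff₀ (add_pos one_pos (ε_pos n)), mul_one]
    exact (norm_le_norm_add_norm_sub _ _).trans (add_le_add norm_f (hp n z norm_z))
  refine .of_tendsto (l := atTop) (fun n => hasPickSplitting_eval S (norm_eval_le n)) fun z hz => ?_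
  have norm_z : ‖z‖ ≤ 1 := (mem_ball_zero_iff.1 (polydisk_eq_ball d ▸ hz)).le
  have tendsto_p : Tendsto (fun n => MvPolynomial.eval z (p n)) atTop (𝓝 (f (r • z))) :=
    tendsto_iff_norm_sub_tendsto_zero.2 (squeeze_zero (fun _ => norm_nonneg _)
      (fun n => (norm_sub_rev _ _).trans_le (hp n z norm_z)) tendsto_ε)
  have tendsto_inv : Tendsto (fun n => (1 + ε n : ℂ)⁻¹) atTop (𝓝 1) := by
    simpa using (((continuous_ofReal.tendsto 0).comp tendsto_ε).const_add 1).inv₀ (by simp)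
  simpa only [map_mul, MvPolynomial.eval_C, one_mul] using tendsto_inv.mul tendsto_p

theorem hasPickSplitting_of_norm_le_one {d : ℕ} (S : Set (Fin d)) {f : (Fin d → ℂ) → ℂ}
    (hf : DifferentiableOn ℂ f (Polydisk d)) (hb : ∀ z ∈ Polydisk d, ‖f z‖ ≤ 1) :
    HasPickSplitting S f := by
  let r (n : ℕ) : ℂ := n / (n + 1)
  have norm_r (n : ℕ) : ‖r n‖ < 1 := by
    have norm_eq : ‖r n‖ = n / (n + 1) := by
      rw [norm_div, norm_natCast, ← Nat.cast_add_one, norm_natCast, Nat.cast_add_one]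
    rw [norm_eq, div_lt_one (by positivity)]
    exact lt_add_one _
  refine .of_tendsto (l := atTop) (fun n => hasPickSplitting_comp_smul S hf hb (norm_r n))
    fun z hz => ?_
  have isOpen_polydisk : IsOpen (Polydisk d) := polydisk_eq_ball d ▸ Metric.isOpen_ball
  have tendsto_smul : Tendsto (fun n => r n • z) atTop (𝓝 z) := by
    simpa using (tendsto_natCast_div_add_atTop (1 : ℂ)).smul_const z
  exact (hf.differentiableAt (isOpen_polydisk.mem_nhds hz)).continuousAt.tendsto.comp tendsto_smul

end PolynomialApproximation

end

theorem pick_kernel_splitting (d : ℕ) (hd : 2 ≤ d)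
    (f : (Fin d → ℂ) → ℂ)
    (hf : DifferentiableOn ℂ f (Polydisk d))
    (hb : ∀ z ∈ Polydisk d, ‖f z‖ ≤ 1)
    (S T : Set (Fin d)) (hST : S ∪ T = Set.univ) (hdisj : S ∩ T = ∅)
    (hS : S ≠ ∅) (hT : T ≠ ∅) :
    ∃ K L : (Fin d → ℂ) → (Fin d → ℂ) → ℂ,
      IsPSDKernelOn (Polydisk d) K ∧ IsPSDKernelOn (Polydisk d) L ∧
      (∀ j ∈ S, JContractive d j K) ∧ (∀ k ∈ T, JContractive d k L) ∧
      ∀ z ∈ Polydisk d, ∀ ζ ∈ Polydisk d,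
        (1 - f z * (starRingEnd ℂ) (f ζ)) /
            ∏ j, (1 - z j * (starRingEnd ℂ) (ζ j)) = K z ζ + L z ζ := by
  have isCompl : IsCompl S T :=
    ⟨Set.disjoint_iff_inter_eq_empty.2 hdisj, codisjoint_iff.2 hST⟩
  rw [← isCompl.compl_eq]
  exact hasPickSplitting_of_norm_le_one S hf hb
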